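/- Let A = (Σ, Q, q0, δ, F) be an alternating safety automaton (F = Q) and p ∈ Σ a Boolean variable. If no two states of A are existentially in conflict for p, then A is in existential normal form for p, i.e., L(∃°p.A) = L(∃p.A). -/

import Mathlib

/-!
A safety automaton accepts `w` iff there is a set `S ⊆ Q × ℕ` containing `(q₀, 0)` such that for each
`(q, i) ∈ S` the formula `δ(q)` is satisfied by the states `q'` with `(q', i + 1) ∈ S` together with
the literals that hold in `w i` (`mem_lang_iff`): no acceptance condition has to be checked, so `S`
can be read off a run, and conversely `S` unfolds to a run.

Given such a witness for `L(A)` on `t`, the same `S` is a witness for `∃°p.A` on the projection of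
`t`, choosing at time `i` the disjunct that substitutes the actual value of `p` in `t i`.

Conversely, a witness `S` for `∃°p.A` on `w` gives, for each `(q, i) ∈ S`, a value `b` of `p` and
hence a minimal satisfying assignment of `δ(q)` made of states of `S`, literals holding in `w i`,
and possibly the literal of `p` with value `b`. These choices define an existential unfolding of `A`
(`unfoldingOf`). If `p` and `¬p` both occurred in it at the same time, they would both be reachable
from the root, so `q₀` would be in conflict with itself. Hence the `p`-literals of the unfolding
consistently determine a value of `p` at each time, that is, a word `t` projecting to `w`, and the
states of the unfolding witness `t ∈ L(A)`.
-/

namespace ABAKC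

/-- Positive Boolean formulas over variable type `α` (no negation). -/
inductive PosBool (α : Type) : Type
  | tt : PosBool α
  | ff : PosBool α
  | var : α → PosBool α
  | and : PosBool α → PosBool α → PosBool α
  | or : PosBool α → PosBool α → PosBool α

namespace PosBool

variable {α β : Type}

/-- Satisfaction of a positive Boolean formula by a set of variables. -/
def eval : PosBool α → Set α → Prop
  | .tt, _ => True
  | .ff, _ => False
  | .var a, X => a ∈ X
  | .and f g, X => f.eval X ∧ g.eval X
  | .or f g, X => f.eval X ∨ g.eval X

/-- The minimal satisfying assignments of a positive Boolean formula. -/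
def mSat (B : PosBool α) : Set (Set α) :=
  {X | B.eval X ∧ ∀ Y : Set α, Y ⊂ X → ¬ B.eval Y}

/-- Substitution of formulas for variables. -/
def bind : PosBool α → (α → PosBool β) → PosBool β
  | .tt, _ => .tt
  | .ff, _ => .ff
  | .var a, f => f a
  | .and g h, f => .and (g.bind f) (h.bind f)
  | .or g h, f => .or (g.bind f) (h.bind f)

end PosBool

/-- Finite disjunction. -/
def bigOr {α : Type} : List (PosBool α) → PosBool α
  | [] => .ff
  | b :: l => .or b (bigOr l)

/-- Finite conjunction. -/
def bigAnd {α : Type} : List (PosBool α) → PosBool α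
  | [] => .tt
  | b :: l => .and b (bigAnd l)

/-- Literals over the Boolean variables `V`: `(a, true)` is `a` and `(a, false)` is `¬a`. -/
abbrev Lit (V : Type) := V × Bool

/-- Infinite words over the alphabet `2^V`. -/
abbrev Word (V : Type) := ℕ → Set V

/-- An alternating Büchi automaton over Boolean variables `V` with state set `Q`:
transition formulas are positive Boolean formulas over states and literals. -/
structure ABA (V : Type) (Q : Type) where
  init : Q
  tr : Q → PosBool (Q ⊕ Lit V)
  acc : Set Q

variable {V Q : Type}

/-- A literal holds in a letter `σ ⊆ V`. -/
def litHolds (σ : Set V) (l : Lit V) : Prop := l.1 ∈ σ ↔ l.2 = true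

/-- A run of an alternating automaton on a word: a `(Q ⊕ Lit V)`-labeled tree whose root
is labeled with the initial state, such that the children labels of every state-labeled
node satisfy the state's transition formula, and literal labels are consistent with the word. -/
structure Run (A : ABA V Q) (w : Word V) where
  nodes : Set (List ℕ)
  label : List ℕ → Q ⊕ Lit V
  root_mem : [] ∈ nodes
  prefix_closed : ∀ {m n : List ℕ}, n ∈ nodes → m <+: n → m ∈ nodes
  root_label : label [] = Sum.inl A.init
  step : ∀ n ∈ nodes, ∀ q : Q, label n = Sum.inl q →
    (A.tr q).eval {x | ∃ d : ℕ, n ++ [d] ∈ nodes ∧ label (n ++ [d]) = x}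
  lit_ok : ∀ n ∈ nodes, ∀ l : Lit V, label n = Sum.inr l → litHolds (w (n.length - 1)) l

/-- A run is accepting if every infinite branch visits the acceptance set infinitely often. -/
def Run.Accepting {A : ABA V Q} {w : Word V} (ρ : Run A w) : Prop :=
  ∀ b : ℕ → ℕ, (∀ k : ℕ, (List.ofFn fun i : Fin k => b i) ∈ ρ.nodes) →
    ∀ k : ℕ, ∃ j : ℕ, k ≤ j ∧ ∃ q ∈ A.acc,
      ρ.label (List.ofFn fun i : Fin j => b i) = Sum.inl q

/-- The language of an alternating Büchi automaton. -/
def ABA.lang (A : ABA V Q) : Set (Word V) := {w | ∃ ρ : Run A w, ρ.Accepting}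

/-- A safety automaton: every state is accepting. -/
def ABA.Safety (A : ABA V Q) : Prop := A.acc = Set.univ

/-- Projection of a word onto `Σ ∖ {p}`. -/
def projWord (p : V) (t : Word V) : Word V := fun i => t i \ {p}

/-- The language of the automaton viewed over the alphabet `Σ ∖ {p}`
(words never containing `p`). -/
def ABA.langWithout (A : ABA V Q) (p : V) : Set (Word V) :=
  {w | w ∈ A.lang ∧ ∀ i : ℕ, p ∉ w i}

/-- The existential quantification `∃p.A`: projections onto `Σ ∖ {p}` of words in `L(A)`. -/
def ABA.existsLang (A : ABA V Q) (p : V) : Set (Word V) :=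
  {w | ∃ t ∈ A.lang, projWord p t = w}

/-- The universal quantification `∀p.A`: words over `Σ ∖ {p}` all of whose `p`-extensions
are in `L(A)`. -/
def ABA.forallLang (A : ABA V Q) (p : V) : Set (Word V) :=
  {w | (∀ i : ℕ, p ∉ w i) ∧ ∀ t : Word V, projWord p t = w → t ∈ A.lang}

/-- Substitute the Boolean value `b` for the variable `p` in all `p`-literals of a
transition formula. -/
def substP [DecidableEq V] (p : V) (b : Bool) (B : PosBool (Q ⊕ Lit V)) :
    PosBool (Q ⊕ Lit V) :=
  B.bind fun x =>
    match x with
    | Sum.inl q => PosBool.var (Sum.inl q)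
    | Sum.inr (a, c) =>
        if a = p then (if c = b then PosBool.tt else PosBool.ff)
        else PosBool.var (Sum.inr (a, c))

/-- State-wise existential quantification `∃°p.A`: replace each `δ(q)` by
`δ(q)[p↦1] ∨ δ(q)[p↦0]`. -/
def ABA.sExists [DecidableEq V] (A : ABA V Q) (p : V) : ABA V Q :=
  { A with tr := fun q => PosBool.or (substP p true (A.tr q)) (substP p false (A.tr q)) }

/-- State-wise universal quantification `∀°p.A`: replace each `δ(q)` by
`δ(q)[p↦1] ∧ δ(q)[p↦0]`. -/
def ABA.sForall [DecidableEq V] (A : ABA V Q) (p : V) : ABA V Q :=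
  { A with tr := fun q => PosBool.and (substP p true (A.tr q)) (substP p false (A.tr q)) }

/-- `A` is in existential normal form for `p`: the language of the state-wise existential
quantification (over the alphabet `Σ ∖ {p}`) equals the language of `∃p.A`. -/
def ExistentialNF [DecidableEq V] (A : ABA V Q) (p : V) : Prop :=
  (A.sExists p).langWithout p = A.existsLang p

/-- `A` is in universal normal form for `p`: the language of the state-wise universal
quantification (over the alphabet `Σ ∖ {p}`) equals the language of `∀p.A`. -/
def UniversalNF [DecidableEq V] (A : ABA V Q) (p : V) : Prop :=
  (A.sForall p).langWithout p = A.forallLang p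

/-- Projection of a transition formula to the states (literals replaced by `true`). -/
def projQ (B : PosBool (Q ⊕ Lit V)) : PosBool Q :=
  B.bind fun x =>
    match x with
    | Sum.inl q => PosBool.var q
    | Sum.inr _ => PosBool.tt

/-- A positive Boolean formula over states is (semantically) a disjunction of states. -/
def IsDisjOfStates (B : PosBool Q) : Prop :=
  ∃ S : Set Q, ∀ X : Set Q, B.eval X ↔ ∃ q ∈ S, q ∈ X

/-- A positive Boolean formula over states is (semantically) a conjunction of states. -/
def IsConjOfStates (B : PosBool Q) : Prop :=
  ∃ S : Set Q, ∀ X : Set Q, B.eval X ↔ ∀ q ∈ S, q ∈ X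

/-- `A` is nondeterministic: each transition formula, projected to the states,
is a disjunction of states. -/
def ABA.Nondet (A : ABA V Q) : Prop := ∀ q : Q, IsDisjOfStates (projQ (A.tr q))

/-- `A` is universal: each transition formula, projected to the states,
is a conjunction of states. -/
def ABA.Universal (A : ABA V Q) : Prop := ∀ q : Q, IsConjOfStates (projQ (A.tr q))

/-- `A` is deterministic: both nondeterministic and universal. -/
def ABA.Deterministic (A : ABA V Q) : Prop := A.Nondet ∧ A.Universal

/-- Vertices of unfoldings: states or literals, paired with a timestep. -/
abbrev UVert (V Q : Type) := (Q ⊕ Lit V) × ℕ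

/-- An existential unfolding of `A`: a DAG over `(Q ∪ L_Σ) × ℕ` rooted at `(q0, 0)`,
where every state vertex `(q, i)` has as successor set exactly `X × {i+1}` for one
chosen minimal satisfying assignment `X` of `δ(q)`, and every vertex is reachable
from the root (smallest-sets condition). -/
structure ExUnfolding (A : ABA V Q) where
  verts : Set (UVert V Q)
  edges : Set (UVert V Q × UVert V Q)
  root_mem : (Sum.inl A.init, 0) ∈ verts
  edges_sub : ∀ e ∈ edges, e.1 ∈ verts ∧ e.2 ∈ verts
  edge_shape : ∀ e ∈ edges, (∃ q : Q, e.1.1 = Sum.inl q) ∧ e.2.2 = e.1.2 + 1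
  succ : ∀ q : Q, ∀ i : ℕ, (Sum.inl q, i) ∈ verts →
    ∃ X ∈ (A.tr q).mSat,
      (∀ x ∈ X, (x, i + 1) ∈ verts ∧ ((Sum.inl q, i), (x, i + 1)) ∈ edges) ∧
      (∀ u : UVert V Q, ((Sum.inl q, i), u) ∈ edges → u.2 = i + 1 ∧ u.1 ∈ X)
  minimal : ∀ v ∈ verts,
    Relation.ReflTransGen (fun a b => (a, b) ∈ edges) (Sum.inl A.init, 0) v

/-- Edge relation of an existential unfolding. -/
def ExUnfolding.edgeRel {A : ABA V Q} (U : ExUnfolding A) (a b : UVert V Q) : Prop :=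
  (a, b) ∈ U.edges

/-- The existential syntactic condition for `p`: no existential unfolding contains both
`(p, i)` and `(¬p, i)` for any timestep `i`. -/
def ExSyntacticCond (A : ABA V Q) (p : V) : Prop :=
  ∀ U : ExUnfolding A, ∀ i : ℕ,
    ¬ ((Sum.inr (p, true), i) ∈ U.verts ∧ (Sum.inr (p, false), i) ∈ U.verts)

/-- `X` covers the transition formula `B`: for every minimal satisfying assignment `X'`
of `B`, `X ∩ X' ∩ Q ≠ ∅` and `X' ∩ L_Σ ⊆ X`. -/
def Covers (B : PosBool (Q ⊕ Lit V)) (X : Set (Q ⊕ Lit V)) : Prop :=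
  ∀ X' ∈ B.mSat,
    (∃ s : Q, Sum.inl s ∈ X ∧ Sum.inl s ∈ X') ∧
    ∀ l : Lit V, Sum.inr l ∈ X' → Sum.inr l ∈ X

/-- A minimal covering set. -/
def MinCover (B : PosBool (Q ⊕ Lit V)) (X : Set (Q ⊕ Lit V)) : Prop :=
  Covers B X ∧ ∀ Y : Set (Q ⊕ Lit V), Y ⊂ X → ¬ Covers B Y

/-- A universal unfolding of `A`: a DAG over `(Q ∪ L_Σ) × ℕ` rooted at `(q0, 0)`,
where every state vertex `(q, i)` has as successor set exactly `X × {i+1}` for some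
minimal set `X` that intersects every minimal satisfying assignment of `δ(q)` in a state
and contains all its literals, and every vertex is reachable from the root. -/
structure UnivUnfolding (A : ABA V Q) where
  verts : Set (UVert V Q)
  edges : Set (UVert V Q × UVert V Q)
  root_mem : (Sum.inl A.init, 0) ∈ verts
  edges_sub : ∀ e ∈ edges, e.1 ∈ verts ∧ e.2 ∈ verts
  edge_shape : ∀ e ∈ edges, (∃ q : Q, e.1.1 = Sum.inl q) ∧ e.2.2 = e.1.2 + 1
  succ : ∀ q : Q, ∀ i : ℕ, (Sum.inl q, i) ∈ verts →
    ∃ X : Set (Q ⊕ Lit V), MinCover (A.tr q) X ∧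
      (∀ x ∈ X, (x, i + 1) ∈ verts ∧ ((Sum.inl q, i), (x, i + 1)) ∈ edges) ∧
      (∀ u : UVert V Q, ((Sum.inl q, i), u) ∈ edges → u.2 = i + 1 ∧ u.1 ∈ X)
  minimal : ∀ v ∈ verts,
    Relation.ReflTransGen (fun a b => (a, b) ∈ edges) (Sum.inl A.init, 0) v

/-- Edge relation of a universal unfolding. -/
def UnivUnfolding.edgeRel {A : ABA V Q} (U : UnivUnfolding A) (a b : UVert V Q) : Prop :=
  (a, b) ∈ U.edges

/-- The universal syntactic condition for `p`: no universal unfolding contains both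
`(p, i)` and `(¬p, i)` for any timestep `i`. -/
def UnivSyntacticCond (A : ABA V Q) (p : V) : Prop :=
  ∀ U : UnivUnfolding A, ∀ i : ℕ,
    ¬ ((Sum.inr (p, true), i) ∈ U.verts ∧ (Sum.inr (p, false), i) ∈ U.verts)

/-- `q` and `q'` are existentially in conflict for `p`. -/
def ExConflict (A : ABA V Q) (p : V) (q q' : Q) : Prop :=
  ∃ U : ExUnfolding A, ∃ i : ℕ,
    (Sum.inl q, i) ∈ U.verts ∧ (Sum.inl q', i) ∈ U.verts ∧
    ∃ i' : ℕ,
      Relation.ReflTransGen U.edgeRel (Sum.inl q, i) (Sum.inr (p, true), i') ∧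
      Relation.ReflTransGen U.edgeRel (Sum.inl q', i) (Sum.inr (p, false), i')

/-- `q` and `q'` are universally in conflict for `p`. -/
def UnivConflict (A : ABA V Q) (p : V) (q q' : Q) : Prop :=
  ∃ U : UnivUnfolding A, ∃ i : ℕ,
    (Sum.inl q, i) ∈ U.verts ∧ (Sum.inl q', i) ∈ U.verts ∧
    ∃ i' : ℕ,
      Relation.ReflTransGen U.edgeRel (Sum.inl q, i) (Sum.inr (p, true), i') ∧
      Relation.ReflTransGen U.edgeRel (Sum.inl q', i) (Sum.inr (p, false), i')

end ABAKC
namespace ABAKC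

variable {V Q : Type}

/-! ### Conflict-detection automata -/

/-- Transition relation of the nondeterministic safety automaton deciding existential
conflict of `q` and `q'`: from `(q1, q2, b)` to `(q1', q2', b')` whenever
`b' = b ∨ (q1 = q ∧ q2 = q')` and there is a set `X` containing `q1'` and `q2'` that is a
minimal satisfying assignment of both `δ(q1)` and `δ(q2)`. -/
def exConfStep (A : ABA V Q) (q q' : Q) (s s' : Q × Q × Bool) : Prop :=
  (s'.2.2 = true ↔ (s.2.2 = true ∨ (s.1 = q ∧ s.2.1 = q'))) ∧
  ∃ X : Set (Q ⊕ Lit V), Sum.inl s'.1 ∈ X ∧ Sum.inl s'.2.1 ∈ X ∧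
    X ∈ (A.tr s.1).mSat ∧ X ∈ (A.tr s.2.1).mSat

/-- Nonemptiness of the existential-conflict automaton: some finite run from
`(q0, q0, false)` reaches, with flag `true`, an accepting target `(p, ¬p, true)` or
`(¬p, p, true)`, i.e., a common minimal satisfying assignment containing both
`p`-literals. -/
def exConfAutNonempty (A : ABA V Q) (q q' : Q) (p : V) : Prop :=
  ∃ (n : ℕ) (σ : ℕ → Q × Q × Bool),
    σ 0 = (A.init, A.init, false) ∧
    (∀ k < n, exConfStep A q q' (σ k) (σ (k + 1))) ∧
    ((σ n).2.2 = true ∨ ((σ n).1 = q ∧ (σ n).2.1 = q')) ∧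
    ∃ X : Set (Q ⊕ Lit V),
      X ∈ (A.tr (σ n).1).mSat ∧ X ∈ (A.tr (σ n).2.1).mSat ∧
      Sum.inr (p, true) ∈ X ∧ Sum.inr (p, false) ∈ X

/-- Transition relation of the nondeterministic safety automaton deciding universal
conflict of `q` and `q'`: as in the existential case, but `q1'` and `q2'` may come from
two different minimal satisfying assignments `X` and `X'`. -/
def univConfStep (A : ABA V Q) (q q' : Q) (s s' : Q × Q × Bool) : Prop :=
  (s'.2.2 = true ↔ (s.2.2 = true ∨ (s.1 = q ∧ s.2.1 = q'))) ∧
  ∃ X X' : Set (Q ⊕ Lit V), Sum.inl s'.1 ∈ X ∧ Sum.inl s'.2.1 ∈ X' ∧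
    X ∈ (A.tr s.1).mSat ∧ X' ∈ (A.tr s.2.1).mSat

/-- Nonemptiness of the universal-conflict automaton. -/
def univConfAutNonempty (A : ABA V Q) (q q' : Q) (p : V) : Prop :=
  ∃ (n : ℕ) (σ : ℕ → Q × Q × Bool),
    σ 0 = (A.init, A.init, false) ∧
    (∀ k < n, univConfStep A q q' (σ k) (σ (k + 1))) ∧
    ((σ n).2.2 = true ∨ ((σ n).1 = q ∧ (σ n).2.1 = q')) ∧
    ∃ X X' : Set (Q ⊕ Lit V),
      X ∈ (A.tr (σ n).1).mSat ∧ X' ∈ (A.tr (σ n).2.1).mSat ∧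
      ((Sum.inr (p, true) ∈ X ∧ Sum.inr (p, false) ∈ X') ∨
       (Sum.inr (p, false) ∈ X ∧ Sum.inr (p, true) ∈ X'))

/-! ### Compilation constructions -/

/-- Macro-states: subsets of the conflict set `M`. -/
abbrev MacroState [DecidableEq Q] (M : Finset Q) := {X : Finset Q // X ⊆ M}

/-- State space of the compiled automata: `2^M ∪ (Q ∖ M)`. -/
abbrev CompState [DecidableEq Q] (M : Finset Q) := MacroState M ⊕ {a : Q // a ∉ M}

/-- The substitution `δ(q)[X'↦1, M∖X'↦0]`, re-targeting the remaining state variables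
(which lie outside `M`) to the compiled state space. -/
def compSubst [DecidableEq Q] (M X' : Finset Q) (B : PosBool (Q ⊕ Lit V)) :
    PosBool (CompState M ⊕ Lit V) :=
  B.bind fun x =>
    match x with
    | Sum.inl s =>
        if s ∈ X' then PosBool.tt
        else if h : s ∈ M then PosBool.ff
        else PosBool.var (Sum.inl (Sum.inr ⟨s, h⟩))
    | Sum.inr l => PosBool.var (Sum.inr l)

/-- The macro-state variable corresponding to `X' ⊆ M`. -/
def macroVar [DecidableEq Q] (M : Finset Q) (X' : {Y : Finset Q // Y ∈ M.powerset}) :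
    PosBool (CompState M ⊕ Lit V) :=
  PosBool.var (Sum.inl (Sum.inl ⟨X'.1, Finset.mem_powerset.mp X'.2⟩))

/-- The existential compilation of `A` with respect to `M ⊆ Q`: a safety automaton with
states `2^M ∪ (Q∖M)`, `δ'(q) = ⋁_{X'⊆M} (X' ∧ δ(q)[X'↦1, M∖X'↦0])` for `q ∈ Q∖M`, and
`δ'(X) = ⋁_{X'⊆M} (X' ∧ ⋀_{q∈X} δ(q)[X'↦1, M∖X'↦0])` for macro-states `X ⊆ M`. -/
noncomputable def exCompile [DecidableEq Q] (A : ABA V Q) (M : Finset Q) : ABA V (CompState M) where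
  init :=
    if h : A.init ∈ M then Sum.inl ⟨{A.init}, Finset.singleton_subset_iff.mpr h⟩
    else Sum.inr ⟨A.init, h⟩
  tr := fun s =>
    bigOr (M.powerset.attach.toList.map fun X' =>
      PosBool.and (macroVar M X')
        (match s with
          | Sum.inr a => compSubst M X'.1 (A.tr a.1)
          | Sum.inl X => bigAnd (X.1.toList.map fun b => compSubst M X'.1 (A.tr b))))
  acc := Set.univ

/-- The universal compilation of `A` with respect to `M ⊆ Q`: a safety automaton with
states `2^M ∪ (Q∖M)`, `δ'(q) = ⋀_{X'⊆M} (X' ∧ δ(q)[X'↦1, M∖X'↦0])` for `q ∈ Q∖M`, and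
`δ'(X) = ⋀_{X'⊆M} (X' ∧ ⋁_{q∈X} δ(q)[X'↦1, M∖X'↦0])` for macro-states `X ⊆ M`. -/
noncomputable def univCompile [DecidableEq Q] (A : ABA V Q) (M : Finset Q) : ABA V (CompState M) where
  init :=
    if h : A.init ∈ M then Sum.inl ⟨{A.init}, Finset.singleton_subset_iff.mpr h⟩
    else Sum.inr ⟨A.init, h⟩
  tr := fun s =>
    bigAnd (M.powerset.attach.toList.map fun X' =>
      PosBool.and (macroVar M X')
        (match s with
          | Sum.inr a => compSubst M X'.1 (A.tr a.1)
          | Sum.inl X => bigOr (X.1.toList.map fun b => compSubst M X'.1 (A.tr b))))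
  acc := Set.univ

/-- `M` over-approximates the states existentially in conflict for `p`:
every state in an existential conflict lies in `M`. -/
def ExOverApprox (A : ABA V Q) (p : V) (M : Finset Q) : Prop :=
  ∀ q q' : Q, ExConflict A p q q' → q ∈ M ∧ q' ∈ M

/-- `M` over-approximates the states universally in conflict for `p`. -/
def UnivOverApprox (A : ABA V Q) (p : V) (M : Finset Q) : Prop :=
  ∀ q q' : Q, UnivConflict A p q q' → q ∈ M ∧ q' ∈ M

/-- A run whose state-labeled nodes have children labels forming a *minimal* satisfying
assignment of the transition formula. -/
structure MinRun (A : ABA V Q) (w : Word V) extends Run A w where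
  min_step : ∀ n ∈ nodes, ∀ q : Q, label n = Sum.inl q →
    {x | ∃ d : ℕ, n ++ [d] ∈ nodes ∧ label (n ++ [d]) = x} ∈ (A.tr q).mSat

/-! ### Fixpoint labelings -/

/-- `post(q)`: the state parts of the minimal satisfying assignments of `δ(q)`. -/
def statePost (A : ABA V Q) (q : Q) : Set (Set Q) :=
  {Y | ∃ X ∈ (A.tr q).mSat, Y = {s : Q | Sum.inl s ∈ X}}

/-- The `p`-literals appearing in some minimal satisfying assignment of `δ(q)`,
i.e., `l(q) ∩ L_{p}`. -/
def pLits (A : ABA V Q) (p : V) (q : Q) : Set (Lit V) :=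
  {l | l.1 = p ∧ ∃ X ∈ (A.tr q).mSat, Sum.inr l ∈ X}

/-- One step of the successor relation on states induced by `post`. -/
def stepRel (A : ABA V Q) (a b : Q) : Prop := ∃ X ∈ statePost A a, b ∈ X

/-- Reachability between states along `post`. -/
def stateReach (A : ABA V Q) (a b : Q) : Prop := Relation.ReflTransGen (stepRel A) a b

/-- The labeling of the existential conflict fixpoint algorithm:
`l[q,0] = { l(q) ∩ L_{p} }` and
`l[q,i] = ⋃_{X ∈ post(q)} { ⋃_{q'∈X} ⋃_{u ∈ l[q',i−1]} u }`. -/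
def exLabel (A : ABA V Q) (p : V) : ℕ → Q → Set (Set (Lit V))
  | 0, q => {pLits A p q}
  | i + 1, q => {S | ∃ X ∈ statePost A q, S = ⋃ q' ∈ X, ⋃ u ∈ exLabel A p i q', u}

/-- The labeling of the universal conflict fixpoint algorithm:
`l[q,0] = { l(q) ∩ L_{p} }` and
`l[q,i] = { ⋃_{X ∈ post(q)} ⋃_{q'∈X} ⋃_{u ∈ l[q',i−1]} u }`. -/
def univLabel (A : ABA V Q) (p : V) : ℕ → Q → Set (Set (Lit V))
  | 0, q => {pLits A p q}
  | i + 1, q => {⋃ X ∈ statePost A q, ⋃ q' ∈ X, ⋃ u ∈ univLabel A p i q', u}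

/-- The conflict set returned by the existential fixpoint algorithm: all states added
(at some iteration) because two conjunctive successors `q', q''` in a common
`X ∈ post(q)` carried different labels, together with everything they reach. -/
def exConfs (A : ABA V Q) (p : V) : Set Q :=
  {s | ∃ i : ℕ, ∃ q : Q, ∃ X ∈ statePost A q, ∃ q' ∈ X, ∃ q'' ∈ X,
    exLabel A p i q' ≠ exLabel A p i q'' ∧
    (s = q' ∨ s = q'' ∨ stateReach A q' s ∨ stateReach A q'' s)}

/-- The conflict set returned by the universal fixpoint algorithm: all states added
(at some iteration) because two disjunctive successors `q' ∈ X`, `q'' ∈ X'` of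
distinct `X, X' ∈ post(q)` carried different labels, together with everything they
reach. -/
def univConfs (A : ABA V Q) (p : V) : Set Q :=
  {s | ∃ i : ℕ, ∃ q : Q, ∃ X ∈ statePost A q, ∃ X' ∈ statePost A q,
    ∃ q' ∈ X, ∃ q'' ∈ X',
    univLabel A p i q' ≠ univLabel A p i q'' ∧
    (s = q' ∨ s = q'' ∨ stateReach A q' s ∨ stateReach A q'' s)}

end ABAKC

namespace ABAKC

open Relation

variable {V Q : Type}

/-! ### Positive Boolean formulas -/

theorem PosBool.eval_mono {α : Type} {X Y : Set α} (hXY : X ⊆ Y) (B : PosBool α) :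
    B.eval X → B.eval Y := by
  induction B with
  | tt => exact id
  | ff => exact id
  | var a => exact fun h => hXY h
  | and f g hf hg => exact fun h => ⟨hf h.1, hg h.2⟩
  | or f g hf hg => exact fun h => h.imp hf hg

theorem PosBool.eval_bind {α β : Type} (B : PosBool α) (f : α → PosBool β) (X : Set β) :
    (B.bind f).eval X ↔ B.eval {a | (f a).eval X} := by
  induction B with
  | tt => exact Iff.rfl
  | ff => exact Iff.rfl
  | var a => exact Iff.rfl
  | and g h hg hh => exact and_congr hg hh
  | or g h hg hh => exact or_congr hg hh

theorem PosBool.exists_mSat_subset {α : Type} [Finite α] (B : PosBool α) (X : Set α)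
    (h : B.eval X) : ∃ M ∈ B.mSat, M ⊆ X := by
  obtain ⟨M, hMX, hM⟩ := exists_minimal_le_of_wellFoundedLT (fun Y => B.eval Y) X h
  exact ⟨M, ⟨hM.prop, fun Y hY hev => hY.2 (hM.le_of_le hev hY.1)⟩, hMX⟩

/-! ### Acceptance by safety automata -/

/-- The states and literals available at time `i` when `S` is the set of timed states from which
the automaton is assumed to accept: states that `S` contains at time `i + 1`, and literals that
hold in the letter `w i`. -/
def avail (w : Word V) (S : Set (Q × ℕ)) (i : ℕ) : Set (Q ⊕ Lit V) :=
  {x | Sum.elim (fun q => (q, i + 1) ∈ S) (litHolds (w i)) x}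

/-- `S` is a set of timed states closed under the transitions of `A` on `w` and containing the
initial state at time `0`. -/
def IsWitness (A : ABA V Q) (w : Word V) (S : Set (Q × ℕ)) : Prop :=
  (A.init, 0) ∈ S ∧ ∀ q i, (q, i) ∈ S → (A.tr q).eval (avail w S i)

theorem Run.isWitness {A : ABA V Q} {w : Word V} (ρ : Run A w) :
    IsWitness A w {s | ∃ n ∈ ρ.nodes, n.length = s.2 ∧ ρ.label n = Sum.inl s.1} := by
  refine ⟨⟨[], ρ.root_mem, rfl, ρ.root_label⟩, ?_⟩
  rintro q _ ⟨n, hn, rfl, hl⟩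
  refine PosBool.eval_mono ?_ _ (ρ.step n hn q hl)
  rintro (q' | l) ⟨d, hd, hx⟩
  · exact ⟨_, hd, by simp, hx⟩
  · simpa [avail] using ρ.lit_ok _ hd l hx

/-- Node labels of the tree of all lists of natural numbers, where the last entry of a list names
its label through `e`, and the root is labeled with `x₀`. -/
def treeLabel {α : Type} (e : ℕ → α) (x₀ : α) (n : List ℕ) : α :=
  n.getLast?.elim x₀ e

@[simp] theorem treeLabel_nil {α : Type} (e : ℕ → α) (x₀ : α) : treeLabel e x₀ [] = x₀ := rfl

@[simp] theorem treeLabel_concat {α : Type} (e : ℕ → α) (x₀ : α) (m : List ℕ) (d : ℕ) :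
    treeLabel e x₀ (m ++ [d]) = e d := by
  simp [treeLabel]

/-- The nodes of the maximal run staying in the witness `S`: every proper prefix of a node is
labeled with a state, and every label other than the root's is available. -/
def treeNodes (A : ABA V Q) (w : Word V) (S : Set (Q × ℕ)) (e : ℕ → Q ⊕ Lit V) : Set (List ℕ) :=
  {n | ∀ m d, m ++ [d] <+: n →
    (∃ q, treeLabel e (Sum.inl A.init) m = Sum.inl q) ∧ e d ∈ avail w S m.length}

theorem mem_of_treeLabel {A : ABA V Q} {w : Word V} {S : Set (Q × ℕ)} (hS : IsWitness A w S)
    {e : ℕ → Q ⊕ Lit V} {n : List ℕ} (hn : n ∈ treeNodes A w S e) {q : Q}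
    (hq : treeLabel e (Sum.inl A.init) n = Sum.inl q) : (q, n.length) ∈ S := by
  rcases List.eq_nil_or_concat n with rfl | ⟨m, d, rfl⟩
  · obtain rfl : A.init = q := by simpa using hq
    exact hS.1
  · rw [List.concat_eq_append] at *
    have h := (hn m d (List.prefix_refl _)).2
    rw [treeLabel_concat] at hq
    rw [hq] at h
    simpa [avail] using h

/-- The run on `w` obtained by unfolding a witness into a tree. -/
def IsWitness.run {A : ABA V Q} {w : Word V} {S : Set (Q × ℕ)} (hS : IsWitness A w S)
    (e : ℕ → Q ⊕ Lit V) (he : Function.Surjective e) : Run A w where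
  nodes := treeNodes A w S e
  label := treeLabel e (Sum.inl A.init)
  root_mem := fun m d h => by simp at h
  prefix_closed := fun hn hmn m d h => hn m d (h.trans hmn)
  root_label := rfl
  step := by
    intro n hn q hq
    refine PosBool.eval_mono ?_ _ (hS.2 q _ (mem_of_treeLabel hS hn hq))
    intro x hx
    obtain ⟨d, rfl⟩ := he x
    refine ⟨d, ?_, by simp⟩
    intro m d' h
    rcases List.prefix_concat_iff.1 h with h | h
    · obtain ⟨rfl, h⟩ := List.append_inj' h rfl
      obtain rfl : d' = d := by simpa using h
      exact ⟨⟨q, hq⟩, hx⟩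
    · exact hn m d' h
  lit_ok := by
    intro n hn l hl
    rcases List.eq_nil_or_concat n with rfl | ⟨m, d, rfl⟩
    · simp at hl
    · rw [List.concat_eq_append] at *
      have h := (hn m d (List.prefix_refl _)).2
      rw [treeLabel_concat] at hl
      rw [hl] at h
      simpa [avail] using h

theorem mem_lang_iff [Finite V] [Finite Q] {A : ABA V Q} (hA : A.Safety) {w : Word V} :
    w ∈ A.lang ↔ ∃ S, IsWitness A w S := by
  constructor
  · rintro ⟨ρ, -⟩
    exact ⟨_, ρ.isWitness⟩
  · rintro ⟨S, hS⟩
    have : Nonempty (Q ⊕ Lit V) := ⟨Sum.inl A.init⟩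
    obtain ⟨e, he⟩ := exists_surjective_nat (Q ⊕ Lit V)
    refine ⟨hS.run e he, fun b hb k => ⟨k, le_rfl, ?_⟩⟩
    -- the branch continues below its node of depth `k`, which is therefore labeled with a state
    have h := hb (k + 1)
    rw [List.ofFn_succ_last] at h
    obtain ⟨q, hq⟩ := (h _ _ (List.prefix_refl _)).1
    exact ⟨q, by rw [hA]; trivial, hq⟩

/-! ### Substitution of a value for `p` -/

/-- The assignment of the original literals and states that corresponds to an assignment `Y` after
the value `b` has been substituted for `p`. -/
def withP (p : V) (b : Bool) (Y : Set (Q ⊕ Lit V)) : Set (Q ⊕ Lit V) :=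
  {x | Sum.elim (fun q => Sum.inl q ∈ Y)
    (fun l => (l.1 = p ∧ l.2 = b) ∨ (l.1 ≠ p ∧ Sum.inr l ∈ Y)) x}

theorem eval_substP [DecidableEq V] (p : V) (b : Bool) (B : PosBool (Q ⊕ Lit V))
    (Y : Set (Q ⊕ Lit V)) : (substP p b B).eval Y ↔ B.eval (withP p b Y) := by
  rw [substP, PosBool.eval_bind]
  refine iff_of_eq (congrArg B.eval (Set.ext ?_))
  rintro (q | ⟨a, c⟩)
  · exact Iff.rfl
  · by_cases ha : a = p <;> by_cases hc : c = b <;> simp [withP, ha, hc, PosBool.eval]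

/-! ### Existential unfoldings -/

section Unfolding

variable (A : ABA V Q) (M : Q → ℕ → Set (Q ⊕ Lit V))

/-- The step relation on timed vertices in which `(q, i)` has successors `M q i × {i + 1}`. -/
def chosenStep (u v : UVert V Q) : Prop :=
  ∃ q, u.1 = Sum.inl q ∧ v.2 = u.2 + 1 ∧ v.1 ∈ M q u.2

/-- The timed vertices reachable from the root along the chosen successor sets. -/
def chosenVerts : Set (UVert V Q) :=
  {v | ReflTransGen (chosenStep M) (Sum.inl A.init, 0) v}

variable {A M}

theorem chosenVerts_succ {u v : UVert V Q} (hu : u ∈ chosenVerts A M) (h : chosenStep M u v) :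
    v ∈ chosenVerts A M :=
  ReflTransGen.tail hu h

/-- The existential unfolding determined by a choice of a minimal satisfying assignment at each
reachable timed state. -/
def unfoldingOf
    (hM : ∀ q i, (Sum.inl q, i) ∈ chosenVerts A M → M q i ∈ (A.tr q).mSat) : ExUnfolding A where
  verts := chosenVerts A M
  edges := {e | e.1 ∈ chosenVerts A M ∧ chosenStep M e.1 e.2}
  root_mem := ReflTransGen.refl
  edges_sub := fun e he => ⟨he.1, chosenVerts_succ he.1 he.2⟩
  edge_shape := by
    rintro e ⟨-, q, hq, hi, -⟩
    exact ⟨⟨q, hq⟩, hi⟩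
  succ := by
    intro q i hv
    refine ⟨M q i, hM q i hv, fun x hx => ?_, ?_⟩
    · have hs : chosenStep M (Sum.inl q, i) (x, i + 1) := ⟨q, rfl, rfl, hx⟩
      exact ⟨chosenVerts_succ hv hs, hv, hs⟩
    · rintro u ⟨-, q', hq, hi, hu⟩
      obtain rfl : q = q' := Sum.inl_injective hq
      exact ⟨hi, hu⟩
  minimal := by
    intro v hv
    induction hv with
    | refl => exact ReflTransGen.refl
    | tail hb hs ih => exact ih.tail ⟨hb, hs⟩

end Unfolding

/-- An existential unfolding never contains both `p`-literals at the same time, because both would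
be reachable from the root. -/
theorem ExUnfolding.not_both_literals {A : ABA V Q} {p : V}
    (h : ¬ ExConflict A p A.init A.init) (U : ExUnfolding A) {i : ℕ}
    (ht : (Sum.inr (p, true), i) ∈ U.verts) : (Sum.inr (p, false), i) ∉ U.verts :=
  fun hf => h ⟨U, 0, U.root_mem, U.root_mem, i, U.minimal _ ht, U.minimal _ hf⟩

/-! ### The two inclusions -/

theorem existsLang_subset [Finite V] [Finite Q] [DecidableEq V] {A : ABA V Q}
    (hSafe : A.Safety) (p : V) : A.existsLang p ⊆ (A.sExists p).langWithout p := by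
  rintro w ⟨t, ht, rfl⟩
  obtain ⟨S, h0, hS⟩ := (mem_lang_iff hSafe).1 ht
  refine ⟨(mem_lang_iff (A := A.sExists p) hSafe).2 ⟨S, h0, fun q i hq => ?_⟩,
    fun i hi => hi.2 rfl⟩
  have key : ∀ b : Bool, (p ∈ t i ↔ b = true) →
      (substP p b (A.tr q)).eval (avail (projWord p t) S i) := by
    intro b hb
    rw [eval_substP]
    refine PosBool.eval_mono ?_ _ (hS q i hq)
    rintro (q' | ⟨a, c⟩) hx
    · exact hx
    · by_cases ha : a = p
      · subst ha
        have hx' : a ∈ t i ↔ c = true := hx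
        exact Or.inl ⟨rfl, Bool.eq_iff_iff.2 (hx'.symm.trans hb)⟩
      · refine Or.inr ⟨ha, ?_⟩
        simpa [avail, litHolds, projWord, ha] using hx
  by_cases hp : p ∈ t i
  · exact Or.inl (key true (by simp [hp]))
  · exact Or.inr (key false (by simp [hp]))

theorem langWithout_subset [Finite V] [Finite Q] [DecidableEq V] {A : ABA V Q}
    (hSafe : A.Safety) (p : V) (h : ¬ ExConflict A p A.init A.init) :
    (A.sExists p).langWithout p ⊆ A.existsLang p := by
  rintro w ⟨hw, hpw⟩
  obtain ⟨S, h0, hS⟩ := (mem_lang_iff (A := A.sExists p) hSafe).1 hw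
  have hex : ∀ q i, ∃ N : Set (Q ⊕ Lit V), (q, i) ∈ S →
      N ∈ (A.tr q).mSat ∧ ∃ b, N ⊆ withP p b (avail w S i) := by
    intro q i
    by_cases hq : (q, i) ∈ S
    · obtain ⟨b, hb⟩ : ∃ b, (A.tr q).eval (withP p b (avail w S i)) := by
        rcases hS q i hq with hb | hb
        · exact ⟨true, (eval_substP ..).1 hb⟩
        · exact ⟨false, (eval_substP ..).1 hb⟩
      obtain ⟨N, hN, hsub⟩ := PosBool.exists_mSat_subset _ _ hb
      exact ⟨N, fun _ => ⟨hN, b, hsub⟩⟩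
    · exact ⟨∅, fun hq' => absurd hq' hq⟩
  choose M hM using hex
  -- the unfolding stays inside the witness, so its choices are minimal satisfying assignments
  have hVS : ∀ v ∈ chosenVerts A M, ∀ q, v.1 = Sum.inl q → (q, v.2) ∈ S := by
    intro v hv
    induction hv with
    | refl =>
      intro q hq
      obtain rfl : A.init = q := Sum.inl_injective hq
      exact h0
    | tail _ hs ih =>
      intro q hq
      obtain ⟨q', hq', hi, hmem⟩ := hs
      obtain ⟨-, b, hsub⟩ := hM q' _ (ih q' hq')
      have hx := hsub hmem
      rw [hq] at hx
      rw [hi]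
      exact hx
  let U := unfoldingOf (A := A) (M := M) fun q i hv => (hM q i (hVS _ hv q rfl)).1
  -- `p` is true at time `i` exactly if the unfolding contains the literal `p`; literals read at
  -- time `i` sit at level `i + 1`
  let t : Word V := fun i => w i ∪ {a | a = p ∧ (Sum.inr (p, true), i + 1) ∈ U.verts}
  refine ⟨t, (mem_lang_iff hSafe).2 ⟨{s | (Sum.inl s.1, s.2) ∈ U.verts}, U.root_mem, ?_⟩, ?_⟩
  · intro q i hv
    obtain ⟨hmin, b, hsub⟩ := hM q i (hVS _ hv q rfl)
    refine PosBool.eval_mono ?_ _ hmin.1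
    intro x hx
    have hxv : (x, i + 1) ∈ U.verts := chosenVerts_succ hv ⟨q, rfl, rfl, hx⟩
    rcases x with q' | ⟨a, c⟩
    · exact hxv
    · change a ∈ t i ↔ c = true
      by_cases ha : a = p
      · subst ha
        have hat : a ∈ t i ↔ (Sum.inr (a, true), i + 1) ∈ U.verts := by
          simp [t, hpw i]
        rw [hat]
        cases c with
        | true => simpa using hxv
        | false => simpa using fun ht => U.not_both_literals h ht hxv
      · have hw' : a ∈ w i ↔ c = true := by
          rcases hsub hx with hx' | hx'
          · exact absurd hx'.1 ha
          · exact hx'.2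
        simpa [t, ha] using hw'
  · funext i
    ext a
    by_cases ha : a = p
    · subst ha
      simp [projWord, hpw i]
    · simp [projWord, t, ha]

/-- If no two states of an alternating safety automaton are existentially
in conflict for `p`, then it is in existential normal form for `p`. -/
theorem no_exConflict_implies_existentialNF {V Q : Type} [Fintype V] [Fintype Q]
    [DecidableEq V] (A : ABA V Q) (hSafe : A.Safety) (p : V)
    (h : ∀ q q' : Q, ¬ ExConflict A p q q') :
    ExistentialNF A p :=
  (langWithout_subset hSafe p (h _ _)).antisymm (existsLang_subset hSafe p)

end ABAKC
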